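/- Let X be a T0 space and let 𝐝(X) be the set of closed d-sets of X, ordered by inclusion. If the map η : X → Σ 𝐝(X), η(x) = closure({x}), is continuous, then ⟨Σ 𝐝(X), η⟩ is a d-reflection of X: Σ 𝐝(X) is a d-space, and for every continuous map f : X → Y to a d-space Y there is a unique continuous map f* : Σ 𝐝(X) → Y with f* ∘ η = f. -/

import Mathlib

universe u v

open Set

/-- The specialization order on a topological space: `specLE x y` iff `x ∈ closure {y}`. -/
def specLE {X : Type*} [TopologicalSpace X] (x y : X) : Prop :=
  x ∈ closure ({y} : Set X)

/-- `a` is an upper bound of `D` with respect to the specialization order. -/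
def specUB {X : Type*} [TopologicalSpace X] (D : Set X) (a : X) : Prop :=
  ∀ d ∈ D, specLE d a

/-- `a` is a least upper bound of `D` with respect to the specialization order. -/
def specLUB {X : Type*} [TopologicalSpace X] (D : Set X) (a : X) : Prop :=
  specUB D a ∧ ∀ b, specUB D b → specLE a b

/-- `U` is Scott open with respect to the specialization order. -/
def ScottOpenSpec {X : Type*} [TopologicalSpace X] (U : Set X) : Prop :=
  (∀ x y, specLE x y → x ∈ U → y ∈ U) ∧
  ∀ D : Set X, D.Nonempty → DirectedOn specLE D → ∀ a, specLUB D a → a ∈ U →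
    (D ∩ U).Nonempty

/-- A d-space (monotone convergence space): a T0 space which is a dcpo in its
specialization order and in which every open set is Scott open with respect to
the specialization order. -/
def DSpace (X : Type*) [TopologicalSpace X] : Prop :=
  T0Space X ∧
  (∀ D : Set X, D.Nonempty → DirectedOn specLE D → ∃ a, specLUB D a) ∧
  (∀ U : Set X, IsOpen U → ScottOpenSpec U)

/-- A set is saturated if it is an intersection of open sets. -/
def Saturated {X : Type*} [TopologicalSpace X] (A : Set X) : Prop :=
  ∃ 𝒰 : Set (Set X), (∀ U ∈ 𝒰, IsOpen U) ∧ A = ⋂₀ 𝒰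

/-- A T0 space is well-filtered if every filtered (under reverse inclusion) family of
nonempty compact saturated sets whose intersection is contained in an open set `U`
has a member contained in `U`. -/
def WellFiltered (X : Type*) [TopologicalSpace X] : Prop :=
  T0Space X ∧
  ∀ 𝒦 : Set (Set X), 𝒦.Nonempty →
    (∀ K ∈ 𝒦, K.Nonempty ∧ IsCompact K ∧ Saturated K) →
    DirectedOn (fun A B => B ⊆ A) 𝒦 →
    ∀ U : Set X, IsOpen U → ⋂₀ 𝒦 ⊆ U → ∃ K ∈ 𝒦, K ⊆ U

/-- A nonempty closed set which is irreducible. -/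
def IrredClosed {X : Type*} [TopologicalSpace X] (A : Set X) : Prop :=
  A.Nonempty ∧ IsClosed A ∧
  ∀ F₁ F₂ : Set X, IsClosed F₁ → IsClosed F₂ → A ⊆ F₁ ∪ F₂ → (A ⊆ F₁ ∨ A ⊆ F₂)

/-- A space is sober if every irreducible closed set is the closure of a unique point. -/
def Sober (X : Type*) [TopologicalSpace X] : Prop :=
  ∀ A : Set X, IrredClosed A → ∃! x : X, A = closure ({x} : Set X)

/-- The specialization preorder on a topological space. -/
def specPreorder (Y : Type*) [TopologicalSpace Y] : Preorder Y where
  le := specLE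
  le_refl x := subset_closure rfl
  le_trans x y z hxy hyz :=
    closure_minimal (Set.singleton_subset_iff.mpr hyz) isClosed_closure hxy

/-- A Scott open subset of a poset: an upper set inaccessible by suprema of directed sets. -/
def IsScottOpen {P : Type*} [Preorder P] (U : Set P) : Prop :=
  IsUpperSet U ∧
  ∀ D : Set P, D.Nonempty → DirectedOn (· ≤ ·) D → ∀ a, IsLUB D a → a ∈ U →
    (D ∩ U).Nonempty

/-- The Scott topology on a poset. `Σ P` is `P` equipped with `scottTop P`. -/
def scottTop (P : Type*) [Preorder P] : TopologicalSpace P where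
  IsOpen := IsScottOpen
  isOpen_univ := by
    refine ⟨isUpperSet_univ, fun D hD _ _ _ _ => ?_⟩
    obtain ⟨d, hd⟩ := hD
    exact ⟨d, hd, trivial⟩
  isOpen_inter := by
    rintro U V ⟨hU1, hU2⟩ ⟨hV1, hV2⟩
    refine ⟨hU1.inter hV1, ?_⟩
    rintro D hne hdir a ha ⟨haU, haV⟩
    obtain ⟨d1, hd1D, hd1U⟩ := hU2 D hne hdir a ha haU
    obtain ⟨d2, hd2D, hd2V⟩ := hV2 D hne hdir a ha haV
    obtain ⟨d3, hd3D, h13, h23⟩ := hdir d1 hd1D d2 hd2D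
    exact ⟨d3, hd3D, hU1 h13 hd1U, hV1 h23 hd2V⟩
  isOpen_sUnion := by
    intro S hS
    refine ⟨isUpperSet_sUnion fun s hs => (hS s hs).1, ?_⟩
    rintro D hne hdir a ha ⟨U, hUS, haU⟩
    obtain ⟨d, hdD, hdU⟩ := (hS U hUS).2 D hne hdir a ha haU
    exact ⟨d, hdD, U, hUS, hdU⟩

/-- A dcpo: every nonempty directed subset has a least upper bound. -/
def IsDcpo (P : Type*) [Preorder P] : Prop :=
  ∀ D : Set P, D.Nonempty → DirectedOn (· ≤ ·) D → ∃ a, IsLUB D a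

/-- The way-below relation. -/
def wayBelow {P : Type*} [Preorder P] (x y : P) : Prop :=
  ∀ D : Set P, D.Nonempty → DirectedOn (· ≤ ·) D → ∀ a, IsLUB D a → y ≤ a →
    ∃ d ∈ D, x ≤ d

/-- A poset is Noetherian if every (nonempty) directed subset has a greatest member. -/
def Noetherian (P : Type*) [Preorder P] : Prop :=
  ∀ D : Set P, D.Nonempty → DirectedOn (· ≤ ·) D → ∃ m ∈ D, ∀ d ∈ D, d ≤ m

/-- An ideal: a (nonempty) directed lower set. -/
def IsIdealSet {P : Type*} [Preorder P] (I : Set P) : Prop :=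
  I.Nonempty ∧ DirectedOn (· ≤ ·) I ∧ IsLowerSet I

/-- The Alexandroff topology on a poset: the open sets are the upper sets. -/
def alexTop (P : Type*) [Preorder P] : TopologicalSpace P where
  IsOpen := IsUpperSet
  isOpen_univ := isUpperSet_univ
  isOpen_inter _ _ := IsUpperSet.inter
  isOpen_sUnion _ h := isUpperSet_sUnion h

/-- The space `X_⊤` obtained from `X` by adjoining a new top point `⊤` (here `none`):
the closed sets are the closed sets of `X` together with the whole space. -/
def topTop (X : Type*) [TopologicalSpace X] : TopologicalSpace (Option X) where
  IsOpen V := V = ∅ ∨ ∃ U : Set X, IsOpen U ∧ V = insert none (some '' U)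
  isOpen_univ := by
    refine Or.inr ⟨Set.univ, isOpen_univ, ?_⟩
    ext (_ | a) <;> simp
  isOpen_inter := by
    rintro V W (rfl | ⟨U₁, hU₁, rfl⟩) hW
    · exact Or.inl (by simp)
    rcases hW with rfl | ⟨U₂, hU₂, rfl⟩
    · exact Or.inl (by simp)
    · refine Or.inr ⟨U₁ ∩ U₂, hU₁.inter hU₂, ?_⟩
      ext (_ | a) <;> simp
  isOpen_sUnion := by
    classical
    intro S hS
    by_cases h0 : ⋃₀ S = ∅
    · exact Or.inl h0
    · refine Or.inr ⟨{x : X | some x ∈ ⋃₀ S}, ?_, ?_⟩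
      · have h1 : {x : X | some x ∈ ⋃₀ S} = ⋃ V ∈ S, some ⁻¹' V := by
          ext x; simp [Set.mem_sUnion]
        rw [h1]
        refine isOpen_biUnion fun V hV => ?_
        rcases hS V hV with rfl | ⟨U, hU, rfl⟩
        · rw [Set.preimage_empty]; exact isOpen_empty
        · have h2 : (some ⁻¹' (insert none (some '' U)) : Set X) = U := by
            ext x; simp
          rw [h2]; exact hU
      · have hnone : (none : Option X) ∈ ⋃₀ S := by
          obtain ⟨v, V, hVS, hvV⟩ := Set.nonempty_iff_ne_empty.mpr h0
          rcases hS V hVS with rfl | ⟨U, hU, rfl⟩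
          · exact absurd hvV (by simp)
          · exact ⟨_, hVS, by simp⟩
        ext (_ | a)
        · simp only [Set.mem_insert_iff, true_or, iff_true]
          exact hnone
        · simp [Set.mem_sUnion]

/-- A `𝐊`-set of a space `X` (relative to a class `K` of spaces): a set whose image
under any continuous map to a `𝐊`-space has the closure of a unique point as closure. -/
def IsKSet (K : (Y : Type u) → TopologicalSpace Y → Prop)
    (X : Type u) [tX : TopologicalSpace X] (A : Set X) : Prop :=
  ∀ (Y : Type u) (tY : TopologicalSpace Y), K Y tY →
    ∀ f : X → Y, @Continuous X Y tX tY f →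
      ∃! y : Y, @closure Y tY (f '' A) = @closure Y tY {y}

/-- `𝐊(X)`: the collection of closed `𝐊`-sets of `X`. -/
def KSets (K : (Y : Type u) → TopologicalSpace Y → Prop)
    (X : Type u) [TopologicalSpace X] : Set (Set X) :=
  {A : Set X | IsClosed A ∧ IsKSet K X A}

/-- The lower Vietoris topology on a family `G` of subsets of `X`, generated by the
sets `◊U = {A ∈ G | A ∩ U ≠ ∅}` for `U` open. -/
def lowerVietoris {X : Type*} [TopologicalSpace X] (G : Set (Set X)) :
    TopologicalSpace ↥G :=
  TopologicalSpace.generateFrom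
    {S : Set ↥G | ∃ U : Set X, IsOpen U ∧ S = {A : ↥G | ((A : Set X) ∩ U).Nonempty}}

/-- A class `K` of spaces is adequate if `P_H(𝐊(X))` is a `𝐊`-space for every T0 space `X`. -/
def Adequate (K : (Y : Type u) → TopologicalSpace Y → Prop) : Prop :=
  ∀ (X : Type u) (tX : TopologicalSpace X), @T0Space X tX →
    K ↥(@KSets K X tX) (@lowerVietoris X tX (@KSets K X tX))

/-- `⟨Z, η⟩` is a `𝐊`-reflection of `X`. -/
def IsKReflection (K : (Y : Type u) → TopologicalSpace Y → Prop)
    (X : Type u) (tX : TopologicalSpace X)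
    (Z : Type u) (tZ : TopologicalSpace Z) (η : X → Z) : Prop :=
  K Z tZ ∧ @Continuous X Z tX tZ η ∧
  ∀ (Y : Type u) (tY : TopologicalSpace Y), K Y tY →
    ∀ f : X → Y, @Continuous X Y tX tY f →
      ∃! g : Z → Y, @Continuous Z Y tZ tY g ∧ g ∘ η = f

/-- The carrier of the Johnstone poset `𝕁 = ℕ × (ℕ ∪ {ω})`. -/
structure Johnstone where
  fst : ℕ
  snd : WithTop ℕ

/-- The Johnstone order: `(j, k) ≤ (m, n)` iff `j = m` and `k ≤ n`, or `n = ω` and `k ≤ m`. -/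
instance : PartialOrder Johnstone where
  le p q := (p.fst = q.fst ∧ p.snd ≤ q.snd) ∨ (q.snd = ⊤ ∧ p.snd ≤ (q.fst : WithTop ℕ))
  le_refl p := Or.inl ⟨rfl, le_rfl⟩
  le_trans p q r hpq hqr := by
    rcases hpq with ⟨h1, h2⟩ | ⟨h1, h2⟩ <;> rcases hqr with ⟨h3, h4⟩ | ⟨h3, h4⟩
    · exact Or.inl ⟨h1.trans h3, h2.trans h4⟩
    · exact Or.inr ⟨h3, h2.trans h4⟩
    · have hr : r.snd = ⊤ := top_le_iff.mp (h1 ▸ h4)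
      exact Or.inr ⟨hr, h3 ▸ h2⟩
    · rw [h1] at h4
      exact absurd h4 (by simp)
  le_antisymm p q hpq hqp := by
    obtain ⟨pf, ps⟩ := p
    obtain ⟨qf, qs⟩ := q
    rcases hpq with ⟨h1, h2⟩ | ⟨h1, h2⟩ <;> rcases hqp with ⟨h3, h4⟩ | ⟨h3, h4⟩
    · dsimp at *
      cases h1
      cases le_antisymm h2 h4
      rfl
    · dsimp at *
      rw [h3] at h2
      rw [top_le_iff.mp h2] at h4
      exact absurd h4 (by simp)
    · dsimp at *
      rw [h1] at h4
      rw [top_le_iff.mp h4] at h2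
      exact absurd h2 (by simp)
    · dsimp at *
      rw [h3] at h2
      exact absurd h2 (by simp)

/-- The class of d-spaces. -/
def dClass : (Y : Type u) → TopologicalSpace Y → Prop := fun Y tY => @DSpace Y tY

/-- The class of well-filtered spaces. -/
def wfClass : (Y : Type u) → TopologicalSpace Y → Prop := fun Y tY => @WellFiltered Y tY

/-- The class of sober spaces. -/
def soberClass : (Y : Type u) → TopologicalSpace Y → Prop := fun Y tY => @Sober Y tY

theorem scott_isClosed_Iic {P : Type*} [Preorder P] (y : P) :
    @IsClosed P (scottTop P) (Set.Iic y) := by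
  letI := scottTop P
  refine ⟨?_⟩
  change IsScottOpen (Set.Iic y)ᶜ
  refine ⟨(isLowerSet_Iic y).compl, ?_⟩
  intro D _ _ a ha hay
  by_contra hne
  apply hay
  refine ha.2 fun d hd => ?_
  by_contra hdy
  exact hne ⟨d, hd, hdy⟩

theorem scott_closure {P : Type*} [Preorder P] (y : P) :
    @closure P (scottTop P) {y} = Set.Iic y := by
  letI := scottTop P
  apply Set.Subset.antisymm
  · exact closure_minimal (by simp) (scott_isClosed_Iic y)
  · intro x hx
    rw [mem_closure_iff]
    intro o ho hxo
    have ho' : IsScottOpen o := ho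
    exact ⟨y, ho'.1 hx hxo, rfl⟩

theorem scott_specLE {P : Type*} [Preorder P] (x y : P) :
    @specLE P (scottTop P) x y ↔ x ≤ y := by
  unfold specLE
  rw [scott_closure]; rfl

theorem scott_dspace {P : Type*} [PartialOrder P] (h : IsDcpo P) :
    @DSpace P (scottTop P) := by
  have e : @specLE P (scottTop P) = (· ≤ ·) := by
    funext x y; exact propext (scott_specLE x y)
  have el : ∀ (D : Set P) (a : P), @specLUB P (scottTop P) D a ↔ IsLUB D a := by
    intro D a
    unfold specLUB specUB
    rw [e]; rfl
  letI := scottTop P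
  refine ⟨?_, ?_, ?_⟩
  · refine ⟨fun x y hxy => ?_⟩
    have h1 : specLE x y := hxy.symm.specializes.mem_closure
    have h2 : specLE y x := hxy.specializes.mem_closure
    exact le_antisymm ((scott_specLE _ _).1 h1) ((scott_specLE _ _).1 h2)
  · intro D hne hD
    rw [e] at hD
    obtain ⟨a, ha⟩ := h D hne hD
    exact ⟨a, (el D a).2 ha⟩
  · intro U hU
    have hU' : IsScottOpen U := hU
    refine ⟨fun x y hxy hx => hU'.1 ((scott_specLE _ _).1 hxy) hx, ?_⟩
    intro D hne hD a ha
    rw [e] at hD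
    exact hU'.2 D hne hD a ((el D a).1 ha)

theorem t0_closure_inj {Y : Type*} [TopologicalSpace Y] (h : T0Space Y) {a b : Y}
    (e : closure ({a} : Set Y) = closure {b}) : a = b :=
  (inseparable_iff_closure_eq.2 e).eq

theorem point_mem_iff {X Y : Type*} [TopologicalSpace Y]
    {f : X → Y} {A : Set X} {y : Y}
    (e : closure (f '' A) = closure {y}) {V : Set Y} (hV : IsOpen V) :
    y ∈ V ↔ (A ∩ f ⁻¹' V).Nonempty := by
  constructor
  · intro hy
    have : y ∈ closure (f '' A) := e ▸ subset_closure rfl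
    obtain ⟨_, hz, x, hx, rfl⟩ := mem_closure_iff.1 this V hV hy
    exact ⟨x, hx, hz⟩
  · rintro ⟨x, hx, hxV⟩
    have : f x ∈ closure {y} := e ▸ subset_closure ⟨x, hx, rfl⟩
    obtain ⟨_, hz, rfl⟩ := mem_closure_iff.1 this V hV hxV
    exact hz

theorem closure_dset {X : Type u} [TopologicalSpace X] (x : X) :
    closure ({x} : Set X) ∈ KSets dClass X := by
  refine ⟨isClosed_closure, fun Y tY hY f hf => ⟨f x, ?_, ?_⟩⟩
  · change closure (f '' closure {x}) = closure {f x}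
    rw [closure_image_closure hf, Set.image_singleton]
  · intro y hy
    change closure (f '' closure {x}) = closure {y} at hy
    rw [closure_image_closure hf, Set.image_singleton] at hy
    exact t0_closure_inj hY.1 hy.symm

theorem closure_sUnion_dset {X : Type u} [TopologicalSpace X]
    (D : Set ↥(KSets dClass X)) (hne : D.Nonempty) (hD : DirectedOn (· ≤ ·) D) :
    closure (⋃ A ∈ D, (A : Set X)) ∈ KSets dClass X := by
  refine ⟨isClosed_closure, fun Y tY hY f hf => ?_⟩
  have hex : ∀ A : ↥(KSets dClass X), ∃ y : Y, closure (f '' (A : Set X)) = closure {y} :=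
    fun A => (A.2.2 Y tY hY f hf).exists
  choose g hg using hex
  have hmono : ∀ A B, A ≤ B → specLE (g A) (g B) := by
    intro A B hAB
    have h1 : g A ∈ closure (f '' (A : Set X)) := hg A ▸ subset_closure rfl
    have h2 : closure (f '' (A : Set X)) ⊆ closure (f '' (B : Set X)) :=
      closure_mono (Set.image_mono hAB)
    have h3 := h2 h1
    rw [hg B] at h3
    exact h3
  have hdir : DirectedOn specLE (g '' D) := by
    rintro _ ⟨A, hA, rfl⟩ _ ⟨B, hB, rfl⟩
    obtain ⟨C, hC, h1, h2⟩ := hD A hA B hB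
    exact ⟨g C, ⟨C, hC, rfl⟩, hmono _ _ h1, hmono _ _ h2⟩
  obtain ⟨a, ha⟩ := hY.2.1 (g '' D) (hne.image g) hdir
  have key : closure (f '' closure (⋃ A ∈ D, (A : Set X))) = closure {a} := by
    rw [closure_image_closure hf]
    apply Set.Subset.antisymm
    · refine closure_minimal ?_ isClosed_closure
      rintro _ ⟨x, hx, rfl⟩
      simp only [Set.mem_iUnion] at hx
      obtain ⟨A, hA, hx⟩ := hx
      have h1 : f x ∈ closure {g A} := hg A ▸ subset_closure ⟨x, hx, rfl⟩
      have h2 : g A ∈ closure {a} := ha.1 _ ⟨A, hA, rfl⟩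
      exact closure_minimal (Set.singleton_subset_iff.2 h2) isClosed_closure h1
    · refine closure_minimal (Set.singleton_subset_iff.2 ?_) isClosed_closure
      rw [mem_closure_iff]
      intro V hV haV
      obtain ⟨_, ⟨A, hA, rfl⟩, hAV⟩ :=
        (hY.2.2 V hV).2 (g '' D) (hne.image g) hdir a ha haV
      obtain ⟨x, hx, hxV⟩ := (point_mem_iff (hg A) hV).1 hAV
      exact ⟨f x, hxV, x, Set.mem_biUnion hA hx, rfl⟩
  refine ⟨a, key, fun y hy => t0_closure_inj hY.1 ?_⟩
  exact hy.symm.trans key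

theorem isLUB_closure {X : Type u} [TopologicalSpace X]
    (D : Set ↥(KSets dClass X)) (hne : D.Nonempty) (hD : DirectedOn (· ≤ ·) D) :
    IsLUB D (⟨_, closure_sUnion_dset D hne hD⟩ : ↥(KSets dClass X)) := by
  constructor
  · intro A hA x hx
    exact subset_closure (Set.mem_biUnion hA hx)
  · intro B hB
    refine closure_minimal ?_ B.2.1
    exact Set.iUnion₂_subset fun A hA => hB hA

theorem stmt10 (X : Type u) [tX : TopologicalSpace X] [T0Space X] :
    (∀ x : X, closure ({x} : Set X) ∈ KSets dClass X) ∧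
    ∀ η : X → ↥(KSets dClass X),
      (∀ x : X, (η x : Set X) = closure ({x} : Set X)) →
      @Continuous X ↥(KSets dClass X) tX (scottTop ↥(KSets dClass X)) η →
      IsKReflection dClass X tX ↥(KSets dClass X) (scottTop ↥(KSets dClass X)) η := by
  refine ⟨closure_dset, fun η hη hc => ?_⟩
  have hdsp : dClass ↥(KSets dClass X) (scottTop ↥(KSets dClass X)) :=
    scott_dspace fun D hne hD => ⟨_, isLUB_closure D hne hD⟩
  refine ⟨hdsp, hc, fun Y tY hY f hf => ?_⟩
  letI := scottTop ↥(KSets dClass X)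
  have hex : ∀ A : ↥(KSets dClass X), ∃ y : Y, closure (f '' (A : Set X)) = closure {y} :=
    fun A => (A.2.2 Y tY hY f hf).exists
  choose g hg using hex
  refine ⟨g, ⟨?_, ?_⟩, ?_⟩
  · refine ⟨fun V hV => ?_⟩
    change IsScottOpen (g ⁻¹' V)
    constructor
    · intro A B hAB hA
      obtain ⟨x, hx, hxV⟩ := (point_mem_iff (hg A) hV).1 hA
      exact (point_mem_iff (hg B) hV).2 ⟨x, hAB hx, hxV⟩
    · intro D hne hD a ha haV
      have hae := ha.unique (isLUB_closure D hne hD)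
      obtain ⟨x, hx, hxV⟩ := (point_mem_iff (hg a) hV).1 haV
      rw [hae] at hx
      obtain ⟨z, hzV, hz⟩ := mem_closure_iff.1 hx _ (hV.preimage hf) hxV
      simp only [Set.mem_iUnion] at hz
      obtain ⟨A, hA, hz⟩ := hz
      exact ⟨A, hA, (point_mem_iff (hg A) hV).2 ⟨z, hz, hzV⟩⟩
  · funext x
    refine t0_closure_inj hY.1 ?_
    change closure {g (η x)} = closure {f x}
    rw [← hg, hη, closure_image_closure hf, Set.image_singleton]
  · rintro k ⟨hk, hkf⟩
    funext A
    refine t0_closure_inj hY.1 ?_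
    obtain ⟨B, hB⟩ := (A.2.2 _ _ hdsp η hc).exists
    have hB' : closure (η '' (A : Set X)) = closure {B} := hB
    have hAB : A ≤ B := by
      intro x hx
      have h1 : η x ∈ closure {B} := hB' ▸ subset_closure ⟨x, hx, rfl⟩
      have h2 : η x ≤ B := (scott_specLE _ _).1 h1
      have h3 : x ∈ (η x : Set X) := by rw [hη]; exact subset_closure rfl
      exact h2 h3
    have hBA : B ≤ A := by
      have h1 : B ∈ closure (η '' (A : Set X)) := hB' ▸ subset_closure rfl
      refine closure_minimal ?_ (scott_isClosed_Iic A) h1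
      rintro _ ⟨x, hx, rfl⟩
      change (η x : Set X) ⊆ A
      rw [hη]
      exact closure_minimal (Set.singleton_subset_iff.2 hx) A.2.1
    have hEq : B = A := le_antisymm hBA hAB
    rw [hEq] at hB'
    calc closure {k A} = closure (k '' {A}) := by rw [Set.image_singleton]
      _ = closure (k '' closure {A}) := (closure_image_closure hk).symm
      _ = closure (k '' closure (η '' (A : Set X))) := by rw [hB']
      _ = closure (k '' (η '' (A : Set X))) := closure_image_closure hk
      _ = closure (f '' (A : Set X)) := by rw [← Set.image_comp, hkf]
      _ = closure {g A} := hg A
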